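/- arXiv:2505.10555 — 2 statements merged into one kernel-verified Lean document; each statement's English description precedes it below -/
import Mathlib

section
/- Fix integers r ≥ 3 and n ≥ 1, let G be a GOTE(r,n) tensor and let x₃, x₄, …, x_r ∈ ℝⁿ be unit vectors. Define the contraction L = G·x₃⊗⋯⊗x_r, the random symmetric n×n matrix with entries L_{ij} = Σ_{i₃,…,i_r=1}^n G_{i,j,i₃,…,i_r} (x₃)_{i₃}⋯(x_r)_{i_r}. Then for every ε > 0, P( |λ₁(n^{−1/2}L) − E[λ₁(n^{−1/2}L)]| > ε ) ≤ 2·exp(−nε²/(2r)). -/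
open MeasureTheory ProbabilityTheory Filter

noncomputable section

/-- The size-`r` multiset of entries of a tuple `a : Fin r → Fin n`. -/
def tupleSym {n r : ℕ} (a : Fin r → Fin n) : Sym (Fin n) r :=
  ⟨(List.ofFn a : Multiset (Fin n)), by simp⟩

/-- `#Perm(a)`: the number of tuples with the same multiset of entries as `a`. -/
def permCount {n r : ℕ} (a : Fin r → Fin n) : ℕ :=
  (Finset.univ.filter (fun b : Fin r → Fin n => tupleSym b = tupleSym a)).card

/-- The sample space for a GOTE(r,n) tensor: one standard Gaussian coordinate for each
size-`r` multiset of indices. -/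
abbrev GoteSpace (r n : ℕ) : Type := Sym (Fin n) r → ℝ

/-- The law of the coordinates of a GOTE(r,n) tensor: a product of standard Gaussians. -/
def goteMeasure (r n : ℕ) : Measure (GoteSpace r n) :=
  Measure.pi fun _ => gaussianReal 0 1

instance (r n : ℕ) : IsProbabilityMeasure (goteMeasure r n) := by
  unfold goteMeasure; infer_instance

/-- The entries of the GOTE(r,n) tensor built from the Gaussian coordinates `ω`. -/
def gote {r n : ℕ} (ω : GoteSpace r n) (a : Fin r → Fin n) : ℝ :=
  Real.sqrt ((r : ℝ) / (permCount a : ℝ)) * ω (tupleSym a)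

/-- The index tuple `(i, j, f 0, …, f (r-3))`. -/
def glue {n r : ℕ} (i j : Fin n) (f : Fin (r - 2) → Fin n) : Fin r → Fin n :=
  fun t =>
    if h0 : (t : ℕ) = 0 then i
    else if h1 : (t : ℕ) = 1 then j
    else f ⟨(t : ℕ) - 2, by have := t.isLt; omega⟩

/-- The pure contraction `G ⬝ w^{⊗(r-2)}`, an `n × n` random symmetric matrix. -/
def pureContraction {r n : ℕ} (ω : GoteSpace r n) (w : Fin n → ℝ) :
    Matrix (Fin n) (Fin n) ℝ :=
  fun i j => ∑ f : Fin (r - 2) → Fin n, gote ω (glue i j f) * ∏ k, w (f k)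

open Classical in
/-- The eigenvalues (in some order) of a matrix, defined for symmetric matrices via the
spectral theorem and as `0` otherwise. -/
def eigsOf {n : ℕ} (A : Matrix (Fin n) (Fin n) ℝ) : Fin n → ℝ :=
  if h : A.IsHermitian then h.eigenvalues else 0

/-- The largest eigenvalue `λ₁` of a symmetric matrix. -/
def lambdaMax {n : ℕ} (A : Matrix (Fin n) (Fin n) ℝ) : ℝ := ⨆ i, eigsOf A i

/-- The smallest eigenvalue `λₙ` of a symmetric matrix. -/
def lambdaMin {n : ℕ} (A : Matrix (Fin n) (Fin n) ℝ) : ℝ := ⨅ i, eigsOf A i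

/-- The semicircle distribution with variance `σ²` (parameter `s = σ²`). -/
def semicircle (s : ℝ) : Measure ℝ :=
  volume.withDensity fun x => ENNReal.ofReal (Real.sqrt (4 * s - x ^ 2) / (2 * Real.pi * s))

end

/-- The general (mixed) contraction `G·x₃⊗⋯⊗x_r` of a GOTE(r,n) tensor along the
directions `x k`, `k : Fin (r−2)`. -/
noncomputable def generalContraction {r n : ℕ} (ω : GoteSpace r n)
    (x : Fin (r - 2) → (Fin n → ℝ)) : Matrix (Fin n) (Fin n) ℝ :=
  fun i j => ∑ f : Fin (r - 2) → Fin n, gote ω (glue i j f) * ∏ k, x k (f k)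

/-!
By the one-dimensional Prékopa–Leindler inequality, the standard Gaussian measure satisfies the
inf-convolution inequality with a quadratic cost. That inequality tensorizes, so it holds in every
dimension with cost `s‖x - z‖² / (2(1 - s))`. Applied to `exp (t F)` for a `K`-Lipschitz `F`, it
compares the cumulant generating function of `F` at `t` with that at `s t`; letting `s → 0` yields
the sharp bound `log E exp (t (F - E F)) ≤ K² t² / 2`, and Chernoff's bound gives the tail.

The squares of the entries of the tensor add up to `r ‖ω‖²`, so Cauchy–Schwarz bounds the quadratic
form of its contraction along unit vectors by `√r ‖ω‖`. By the variational characterization of `λ₁`,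
the map `ω ↦ λ₁(n^{-1/2} L)` is therefore `√(r/n)`-Lipschitz.
-/

section

open scoped ENNReal NNReal Pointwise Topology

/-! ### Brunn–Minkowski and Prékopa–Leindler on the line -/

theorem volume_add_volume_le_of_isCompact {A B : Set ℝ} (hA : IsCompact A) (hB : IsCompact B)
    (hA' : A.Nonempty) (hB' : B.Nonempty) : volume A + volume B ≤ volume (A + B) := by
  have hsub : A + {sInf B} ∪ ({sSup A} + B) ⊆ A + B :=
    Set.union_subset (Set.add_subset_add_left (by simpa using hB.sInf_mem hB'))
      (Set.add_subset_add_right (by simpa using hA.sSup_mem hA'))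
  have hinter : (A + {sInf B}) ∩ ({sSup A} + B) ⊆ {sSup A + sInf B} := by
    simp only [Set.add_singleton, Set.singleton_add]
    rintro _ ⟨⟨a, ha, rfl⟩, b, hb, hab⟩
    have haA : a ≤ sSup A := le_csSup hA.bddAbove ha
    have hbB : sInf B ≤ b := csInf_le hB.bddBelow hb
    simp only [Set.mem_singleton_iff] at hab ⊢
    linarith
  -- The two translates overlap in at most one point, so their measures add up.
  calc volume A + volume B = volume (A + {sInf B}) + volume ({sSup A} + B) := by simp
    _ = volume (A + {sInf B} ∪ ({sSup A} + B)) :=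
        (measure_union₀ (isCompact_singleton.add hB).measurableSet.nullMeasurableSet
          (measure_mono_null hinter (measure_singleton _))).symm
    _ ≤ volume (A + B) := measure_mono hsub

theorem volume_add_volume_le {A B : Set ℝ} (hA : MeasurableSet A) (hB : MeasurableSet B)
    (hA' : A.Nonempty) (hB' : B.Nonempty) : volume A + volume B ≤ volume (A + B) := by
  obtain ⟨a, ha⟩ := hA'
  obtain ⟨b, hb⟩ := hB'
  rw [hA.measure_eq_iSup_isCompact, hB.measure_eq_iSup_isCompact]
  simp only [iSup_and']
  refine ENNReal.biSup_add_biSup_le' ⟨∅, by simp⟩ ⟨∅, by simp⟩ fun K ⟨hKA, hK⟩ M ⟨hMB, hM⟩ => ?_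
  calc volume K + volume M ≤ volume (insert a K) + volume (insert b M) := by
        gcongr <;> exact Set.subset_insert _ _
    _ ≤ volume (insert a K + insert b M) :=
        volume_add_volume_le_of_isCompact (hK.insert a) (hM.insert b)
          (Set.insert_nonempty a K) (Set.insert_nonempty b M)
    _ ≤ volume (A + B) :=
        measure_mono (Set.add_subset_add (Set.insert_subset ha hKA) (Set.insert_subset hb hMB))

theorem rpow_mul_rpow_one_sub_le_add {s : ℝ} (hs₀ : 0 < s) (hs₁ : s < 1) (x y : ℝ≥0∞) :
    x ^ s * y ^ (1 - s) ≤ ENNReal.ofReal s * x + ENNReal.ofReal (1 - s) * y := by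
  have hs' : 0 < 1 - s := sub_pos.2 hs₁
  have hconj : s⁻¹.HolderConjugate (1 - s)⁻¹ :=
    Real.holderConjugate_iff.2 ⟨(one_lt_inv₀ hs₀).2 hs₁, by simp⟩
  have h := ENNReal.young_inequality (x ^ s) (y ^ (1 - s)) hconj
  rwa [ENNReal.rpow_rpow_inv hs₀.ne', ENNReal.rpow_rpow_inv hs'.ne',
    ENNReal.ofReal_inv_of_pos hs₀, ENNReal.ofReal_inv_of_pos hs', div_eq_mul_inv, div_eq_mul_inv,
    inv_inv, inv_inv, mul_comm x, mul_comm y] at h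

theorem volume_Ioi_inter_ofReal_lt (y : ℝ≥0∞) :
    volume {t : ℝ | 0 < t ∧ ENNReal.ofReal t < y} = y := by
  induction y with
  | top =>
    have h : {t : ℝ | 0 < t ∧ ENNReal.ofReal t < ∞} = Set.Ioi 0 := by ext; simp
    rw [h, Real.volume_Ioi]
  | coe y =>
    have h : {t : ℝ | 0 < t ∧ ENNReal.ofReal t < y} = Set.Ioo 0 (y : ℝ) := by
      ext t
      exact and_congr_right fun ht => ENNReal.ofReal_lt_coe_iff ht.le
    rw [h, Real.volume_Ioo, sub_zero, ENNReal.ofReal_coe_nnreal]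

theorem lintegral_eq_lintegral_measure_ofReal_lt {α : Type*} [MeasurableSpace α] (μ : Measure α)
    [SFinite μ] {f : α → ℝ≥0∞} (hf : Measurable f) :
    ∫⁻ x, f x ∂μ = ∫⁻ t in Set.Ioi (0 : ℝ), μ {x | ENNReal.ofReal t < f x} := by
  have hS : MeasurableSet {p : α × ℝ | ENNReal.ofReal p.2 < f p.1} :=
    measurableSet_lt (by fun_prop) (by fun_prop)
  calc ∫⁻ x, f x ∂μ
      = ∫⁻ x, volume.restrict (Set.Ioi 0) {t : ℝ | ENNReal.ofReal t < f x} ∂μ := by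
        refine lintegral_congr fun x => ?_
        rw [Measure.restrict_apply' measurableSet_Ioi, Set.inter_comm]
        exact (volume_Ioi_inter_ofReal_lt (f x)).symm
    _ = μ.prod (volume.restrict (Set.Ioi 0)) {p | ENNReal.ofReal p.2 < f p.1} :=
        (Measure.prod_apply hS).symm
    _ = ∫⁻ t in Set.Ioi (0 : ℝ), μ {x | ENNReal.ofReal t < f x} := Measure.prod_apply_symm hS

section PrekopaLeindler

variable {s : ℝ} {f g h : ℝ → ℝ≥0∞}

theorem smul_superlevel_add_smul_superlevel_subset (hs₀ : 0 < s) (hs₁ : s < 1)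
    (hfgh : ∀ x y, f x ^ s * g y ^ (1 - s) ≤ h (s * x + (1 - s) * y))
    {t : ℝ≥0∞} (ht₀ : t ≠ 0) (ht : t ≠ ∞) :
    s • {x | t < f x} + (1 - s) • {y | t < g y} ⊆ {z | t < h z} := by
  rintro _ ⟨_, ⟨x, hx, rfl⟩, _, ⟨y, hy, rfl⟩, rfl⟩
  calc t = t ^ s * t ^ (1 - s) := by rw [← ENNReal.rpow_add _ _ ht₀ ht]; simp
    _ < f x ^ s * g y ^ (1 - s) :=
        ENNReal.mul_lt_mul (ENNReal.rpow_lt_rpow hx hs₀) (ENNReal.rpow_lt_rpow hy (sub_pos.2 hs₁))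
    _ ≤ h (s * x + (1 - s) * y) := hfgh x y

theorem mul_volume_superlevel_add_le (hs₀ : 0 < s) (hs₁ : s < 1)
    (hf : Measurable f) (hg : Measurable g)
    (hfgh : ∀ x y, f x ^ s * g y ^ (1 - s) ≤ h (s * x + (1 - s) * y))
    {t : ℝ≥0∞} (ht₀ : t ≠ 0) (ht : t ≠ ∞) (htf : t < ⨆ x, f x) (htg : t < ⨆ y, g y) :
    ENNReal.ofReal s * volume {x | t < f x} + ENNReal.ofReal (1 - s) * volume {y | t < g y}
      ≤ volume {z | t < h z} := by
  have volume_smul (c : ℝ) (hc : 0 < c) (A : Set ℝ) :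
      volume (c • A) = ENNReal.ofReal c * volume A := by
    rw [Measure.addHaar_smul, Module.finrank_self, pow_one, abs_of_pos hc]
  rw [← volume_smul s hs₀, ← volume_smul (1 - s) (sub_pos.2 hs₁)]
  have hf_nonempty : {x | t < f x}.Nonempty := lt_iSup_iff.1 htf
  have hg_nonempty : {y | t < g y}.Nonempty := lt_iSup_iff.1 htg
  exact (volume_add_volume_le ((measurableSet_lt measurable_const hf).const_smul₀ s)
    ((measurableSet_lt measurable_const hg).const_smul₀ (1 - s))
    hf_nonempty.smul_set hg_nonempty.smul_set).trans
    (measure_mono (smul_superlevel_add_smul_superlevel_subset hs₀ hs₁ hfgh ht₀ ht))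

theorem mul_lintegral_add_mul_lintegral_le_of_iSup_eq (hs₀ : 0 < s) (hs₁ : s < 1)
    (hf : Measurable f) (hg : Measurable g) (hh : Measurable h)
    (hfgh : ∀ x y, f x ^ s * g y ^ (1 - s) ≤ h (s * x + (1 - s) * y))
    (hsup : ⨆ x, f x = ⨆ y, g y) :
    ENNReal.ofReal s * (∫⁻ x, f x) + ENNReal.ofReal (1 - s) * (∫⁻ y, g y) ≤ ∫⁻ z, h z := by
  rw [lintegral_eq_lintegral_measure_ofReal_lt _ hf, lintegral_eq_lintegral_measure_ofReal_lt _ hg,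
    lintegral_eq_lintegral_measure_ofReal_lt _ hh,
    ← lintegral_const_mul' _ _ ENNReal.ofReal_ne_top,
    ← lintegral_const_mul' _ _ ENNReal.ofReal_ne_top]
  refine (le_lintegral_add _ _).trans (setLIntegral_mono' measurableSet_Ioi fun t ht => ?_)
  rcases lt_or_ge (ENNReal.ofReal t) (⨆ x, f x) with hlt | hle
  · exact mul_volume_superlevel_add_le hs₀ hs₁ hf hg hfgh (ENNReal.ofReal_pos.2 ht).ne'
      ENNReal.ofReal_ne_top hlt (hsup ▸ hlt)
  · have hf_empty (x : ℝ) : ¬ ENNReal.ofReal t < f x := ((le_iSup f x).trans hle).not_gt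
    have hg_empty (y : ℝ) : ¬ ENNReal.ofReal t < g y :=
      ((le_iSup g y).trans (hsup ▸ hle)).not_gt
    simp [hf_empty, hg_empty]

theorem prekopa_leindler_of_iSup_ne_top (hs₀ : 0 < s) (hs₁ : s < 1)
    (hf : Measurable f) (hg : Measurable g) (hh : Measurable h)
    (hfgh : ∀ x y, f x ^ s * g y ^ (1 - s) ≤ h (s * x + (1 - s) * y))
    (hf_top : ⨆ x, f x ≠ ∞) (hg_top : ⨆ y, g y ≠ ∞) :
    (∫⁻ x, f x) ^ s * (∫⁻ y, g y) ^ (1 - s) ≤ ∫⁻ z, h z := by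
  have hs' : 0 < 1 - s := sub_pos.2 hs₁
  set a := ⨆ x, f x
  set b := ⨆ y, g y
  rcases eq_or_ne a 0 with ha | ha
  · simp [fun x => ENNReal.iSup_eq_zero.1 ha x, hs₀]
  rcases eq_or_ne b 0 with hb | hb
  · simp [fun x => ENNReal.iSup_eq_zero.1 hb x, hs']
  have hscale (x y : ℝ≥0∞) : (a⁻¹ * x) ^ s * (b⁻¹ * y) ^ (1 - s)
      = (a ^ s * b ^ (1 - s))⁻¹ * (x ^ s * y ^ (1 - s)) := by
    rw [ENNReal.mul_rpow_of_nonneg _ _ hs₀.le, ENNReal.mul_rpow_of_nonneg _ _ hs'.le,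
      ENNReal.inv_rpow, ENNReal.inv_rpow,
      ENNReal.mul_inv (by simp [ha, hs₀.le]) (by simp [hf_top, hs₀.le])]
    ring
  have hab₀ : a ^ s * b ^ (1 - s) ≠ 0 := by simp [ha, hb, hs₀.le, hs₁.le]
  have hab : a ^ s * b ^ (1 - s) ≠ ∞ := by finiteness
  -- Rescaling makes both suprema equal to `1`, so that the additive inequality applies.
  have hnorm := mul_lintegral_add_mul_lintegral_le_of_iSup_eq hs₀ hs₁ (hf.const_mul a⁻¹)
    (hg.const_mul b⁻¹) (hh.const_mul (a ^ s * b ^ (1 - s))⁻¹)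
    (fun x y => by rw [hscale]; gcongr; exact hfgh x y)
    (by rw [← ENNReal.mul_iSup, ← ENNReal.mul_iSup, ENNReal.inv_mul_cancel ha hf_top,
      ENNReal.inv_mul_cancel hb hg_top])
  rw [lintegral_const_mul _ hf, lintegral_const_mul _ hg, lintegral_const_mul _ hh] at hnorm
  have hgeom := (rpow_mul_rpow_one_sub_le_add hs₀ hs₁ _ _).trans hnorm
  rw [hscale] at hgeom
  exact (ENNReal.mul_le_mul_iff_right (ENNReal.inv_ne_zero.2 hab)
    (ENNReal.inv_ne_top.2 hab₀)).1 hgeom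

theorem tendsto_lintegral_min_natCast {α : Type*} [MeasurableSpace α] (μ : Measure α)
    {f : α → ℝ≥0∞} (hf : Measurable f) :
    Tendsto (fun N : ℕ => ∫⁻ x, min (f x) N ∂μ) atTop (𝓝 (∫⁻ x, f x ∂μ)) := by
  refine lintegral_tendsto_of_tendsto_of_monotone (fun N => (hf.min measurable_const).aemeasurable)
    (.of_forall fun x N N' hN => min_le_min le_rfl (Nat.cast_le.2 hN)) (.of_forall fun x => ?_)
  simpa using tendsto_const_nhds.min (ENNReal.tendsto_nat_nhds_top) (f := fun _ => f x)

theorem prekopa_leindler (hs₀ : 0 < s) (hs₁ : s < 1)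
    (hf : Measurable f) (hg : Measurable g) (hh : Measurable h)
    (hfgh : ∀ x y, f x ^ s * g y ^ (1 - s) ≤ h (s * x + (1 - s) * y)) :
    (∫⁻ x, f x) ^ s * (∫⁻ y, g y) ^ (1 - s) ≤ ∫⁻ z, h z := by
  have hs' : 0 < 1 - s := sub_pos.2 hs₁
  have iSup_min_ne_top (k : ℝ → ℝ≥0∞) (N : ℕ) : ⨆ x, min (k x) N ≠ ∞ :=
    ne_top_of_le_ne_top (ENNReal.natCast_ne_top N) (iSup_le fun x => min_le_right _ _)
  have truncated (N : ℕ) :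
      (∫⁻ x, min (f x) N) ^ s * (∫⁻ y, min (g y) N) ^ (1 - s) ≤ ∫⁻ z, h z :=
    prekopa_leindler_of_iSup_ne_top hs₀ hs₁ (hf.min measurable_const) (hg.min measurable_const) hh
      (fun x y => le_trans (by gcongr <;> exact min_le_left _ _) (hfgh x y))
      (iSup_min_ne_top f N) (iSup_min_ne_top g N)
  rcases eq_or_ne (∫⁻ x, f x) 0 with hf₀ | hf₀
  · simp [hf₀, hs₀]
  rcases eq_or_ne (∫⁻ y, g y) 0 with hg₀ | hg₀
  · simp [hg₀, hs']
  refine le_of_tendsto' (ENNReal.Tendsto.mul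
    ((tendsto_lintegral_min_natCast volume hf).ennrpow_const s) (.inl ?_)
    ((tendsto_lintegral_min_natCast volume hg).ennrpow_const (1 - s)) (.inl ?_)) truncated
  · simp [hf₀, hs₀.le]
  · simp [hg₀, hs₁.le]

end PrekopaLeindler

/-! ### The inf-convolution inequality -/

/-- The inf-convolution inequality (Maurey's property `(τ)`) with exponent `s` and transport cost
`c`: the Prékopa–Leindler inequality relative to `μ`, with the second function equal to `1`.
Quantifying over measurable `h` instead of taking `h z = ⨆ x, u x ^ s * exp (-c x z)` avoids
asking for measurability of that supremum. -/
def InfConvInequality {α : Type*} [MeasurableSpace α] (s : ℝ) (c : α → α → ℝ) (μ : Measure α) :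
    Prop :=
  ∀ u h : α → ℝ≥0∞, Measurable u → Measurable h →
    (∀ x z, u x ^ s ≤ h z * ENNReal.ofReal (Real.exp (c x z))) →
      (∫⁻ x, u x ∂μ) ^ s ≤ ∫⁻ z, h z ∂μ

namespace InfConvInequality

variable {α β : Type*} [MeasurableSpace α] [MeasurableSpace β] {s : ℝ}
  {μ : Measure α} {ν : Measure β}

theorem of_measurePreserving {c : β → β → ℝ} {e : α → β} (he : MeasurePreserving e μ ν)
    (hμ : InfConvInequality s (fun x z => c (e x) (e z)) μ) : InfConvInequality s c ν := by
  intro u h hu hh huh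
  rw [← he.lintegral_comp hu, ← he.lintegral_comp hh]
  exact hμ _ _ (hu.comp he.measurable) (hh.comp he.measurable) fun x z => huh (e x) (e z)

theorem prod [SFinite ν] {c : α → α → ℝ} {d : β → β → ℝ}
    (hμ : InfConvInequality s c μ) (hν : InfConvInequality s d ν) :
    InfConvInequality s (fun p q : α × β => c p.1 q.1 + d p.2 q.2) (μ.prod ν) := by
  intro u h hu hh huh
  rw [lintegral_prod _ hu.aemeasurable, lintegral_prod _ hh.aemeasurable]
  refine hμ _ _ hu.lintegral_prod_right' hh.lintegral_prod_right' fun x z => ?_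
  have hhz : Measurable fun y => h (z, y) := hh.comp measurable_prodMk_left
  rw [← lintegral_mul_const _ hhz]
  refine hν _ _ (hu.comp measurable_prodMk_left) (hhz.mul_const _) fun y w => ?_
  rw [mul_assoc, ← ENNReal.ofReal_mul (Real.exp_pos _).le, ← Real.exp_add]
  exact huh (x, y) (z, w)

theorem pi {d : ℕ} {X : Fin d → Type*} [∀ i, MeasurableSpace (X i)] {μ : ∀ i, Measure (X i)}
    [∀ i, SigmaFinite (μ i)] {c : ∀ i, X i → X i → ℝ}
    (hμ : ∀ i, InfConvInequality s (c i) (μ i)) :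
    InfConvInequality s (fun x z => ∑ i, c i (x i) (z i)) (Measure.pi μ) := by
  induction d with
  | zero =>
    intro u h hu hh huh
    rw [Measure.pi_of_empty, lintegral_dirac' _ hu, lintegral_dirac' _ hh]
    simpa using huh isEmptyElim isEmptyElim
  | succ d ih =>
    refine of_measurePreserving (measurePreserving_piFinSuccAbove μ 0).symm ?_
    simp only [Fin.sum_univ_succ]
    exact (hμ 0).prod (ih fun i => hμ i.succ)

end InfConvInequality

theorem gaussianPDF_rpow_mul_rpow_one_sub {s : ℝ} (hs₀ : 0 ≤ s) (hs₁ : s ≤ 1) (x y : ℝ) :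
    gaussianPDF 0 1 x ^ s * gaussianPDF 0 1 y ^ (1 - s) *
        ENNReal.ofReal (Real.exp (s * (1 - s) * (x - y) ^ 2 / 2)) =
      gaussianPDF 0 1 (s * x + (1 - s) * y) := by
  have hs₁' : 0 ≤ 1 - s := sub_nonneg.2 hs₁
  have hc : 0 < (√(2 * Real.pi * (1 : ℝ≥0)))⁻¹ := by positivity
  simp only [gaussianPDF]
  rw [ENNReal.ofReal_rpow_of_nonneg (gaussianPDFReal_nonneg ..) hs₀,
    ENNReal.ofReal_rpow_of_nonneg (gaussianPDFReal_nonneg ..) hs₁',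
    ← ENNReal.ofReal_mul (Real.rpow_nonneg (gaussianPDFReal_nonneg ..) _),
    ← ENNReal.ofReal_mul (mul_nonneg (Real.rpow_nonneg (gaussianPDFReal_nonneg ..) _)
      (Real.rpow_nonneg (gaussianPDFReal_nonneg ..) _))]
  simp only [gaussianPDFReal]
  congr 1
  rw [Real.mul_rpow hc.le (Real.exp_pos _).le, Real.mul_rpow hc.le (Real.exp_pos _).le,
    mul_mul_mul_comm, ← Real.rpow_add hc, add_sub_cancel, Real.rpow_one, ← Real.exp_mul,
    ← Real.exp_mul, mul_assoc, ← Real.exp_add, ← Real.exp_add]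
  congr 2
  push_cast
  ring

theorem infConvInequality_gaussianReal {s : ℝ} (hs₀ : 0 < s) (hs₁ : s < 1) :
    InfConvInequality s (fun x z => s * (x - z) ^ 2 / (2 * (1 - s))) (gaussianReal 0 1) := by
  intro u h hu hh huh
  have hs₁' : 0 < 1 - s := sub_pos.2 hs₁
  have hφ : Measurable (gaussianPDF 0 1) := measurable_gaussianPDF 0 1
  rw [gaussianReal_of_var_ne_zero 0 one_ne_zero, lintegral_withDensity_eq_lintegral_mul _ hφ hu,
    lintegral_withDensity_eq_lintegral_mul _ hφ hh]
  have key := prekopa_leindler hs₀ hs₁ (hφ.mul hu) hφ (hφ.mul hh) fun x y => ?_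
  · simpa [lintegral_gaussianPDF_eq_one] using key
  · set z := s * x + (1 - s) * y with hz
    have hcost : s * (x - z) ^ 2 / (2 * (1 - s)) = s * (1 - s) * (x - y) ^ 2 / 2 := by
      rw [hz]; field_simp; ring
    calc (gaussianPDF 0 1 x * u x) ^ s * gaussianPDF 0 1 y ^ (1 - s)
        = gaussianPDF 0 1 x ^ s * gaussianPDF 0 1 y ^ (1 - s) * u x ^ s := by
          rw [ENNReal.mul_rpow_of_nonneg _ _ hs₀.le, mul_right_comm]
      _ ≤ gaussianPDF 0 1 x ^ s * gaussianPDF 0 1 y ^ (1 - s) *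
            (h z * ENNReal.ofReal (Real.exp (s * (1 - s) * (x - y) ^ 2 / 2))) := by
          gcongr; rw [← hcost]; exact huh x z
      _ = gaussianPDF 0 1 z * h z := by
          rw [hz, ← gaussianPDF_rpow_mul_rpow_one_sub hs₀.le hs₁.le]
          ring

/-! ### Gaussian concentration of Lipschitz functions -/

theorem mul_le_of_lipschitzWith {M : Type*} [PseudoMetricSpace M] {K : ℝ≥0} {F : M → ℝ}
    (hF : LipschitzWith K F) {a : ℝ} (ha : 0 < a) (t : ℝ) (x z : M) :
    t * F x ≤ t * F z + a * (K * t) ^ 2 / 2 + dist x z ^ 2 / (2 * a) := by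
  have hlip : t * (F x - F z) ≤ |t| * (K * dist x z) :=
    (le_abs_self _).trans <| abs_mul t _ ▸
      mul_le_mul_of_nonneg_left (hF.dist_le_mul x z) (abs_nonneg t)
  have hsq : a * (K * t) ^ 2 / 2 + dist x z ^ 2 / (2 * a) - |t| * (K * dist x z) =
      (a * K * |t| - dist x z) ^ 2 / (2 * a) := by
    rw [mul_pow, ← sq_abs t]; field_simp; ring
  have : 0 ≤ (a * K * |t| - dist x z) ^ 2 / (2 * a) := by positivity
  linarith

theorem integrable_exp_mul_of_lipschitzWith {B : Type*} [NormedAddCommGroup B] [NormedSpace ℝ B]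
    [CompleteSpace B] [SecondCountableTopology B] [MeasurableSpace B] [BorelSpace B]
    {μ : Measure B} [IsGaussian μ] {K : ℝ≥0} {F : B → ℝ} (hF : LipschitzWith K F) (t : ℝ) :
    Integrable (fun x => Real.exp (t * F x)) μ := by
  obtain ⟨C, hC, hint⟩ := IsGaussian.exists_integrable_exp_sq μ
  have hmeas : Measurable F := hF.continuous.measurable
  refine (hint.const_mul (Real.exp (t * F 0 + (2 * C)⁻¹ * (K * t) ^ 2 / 2))).mono' (by fun_prop)
    (.of_forall fun x => ?_)
  rw [Real.norm_eq_abs, Real.abs_exp, ← Real.exp_add, Real.exp_le_exp]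
  have hyoung := mul_le_of_lipschitzWith hF (a := (2 * C)⁻¹) (by positivity) t x 0
  rw [dist_zero_right] at hyoung
  calc t * F x ≤ t * F 0 + (2 * C)⁻¹ * (K * t) ^ 2 / 2 + ‖x‖ ^ 2 / (2 * (2 * C)⁻¹) := hyoung
    _ = t * F 0 + (2 * C)⁻¹ * (K * t) ^ 2 / 2 + C * ‖x‖ ^ 2 := by field_simp

section Moments

variable {Ω : Type*} [MeasurableSpace Ω] {μ : Measure Ω} {X : Ω → ℝ}

theorem tendsto_inv_mul_cgf_mul [IsProbabilityMeasure μ]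
    (h₀ : 0 ∈ interior (integrableExpSet X μ)) (t : ℝ) :
    Tendsto (fun s => s⁻¹ * cgf X μ (s * t)) (𝓝[>] 0) (𝓝 (t * μ[X])) := by
  have hcgf : HasDerivAt (cgf X μ) μ[X] (0 * t) := by
    simpa [deriv_cgf_zero h₀] using (analyticAt_cgf h₀).differentiableAt.hasDerivAt
  have hcomp := hcgf.comp (0 : ℝ) ((hasDerivAt_id (0 : ℝ)).mul_const t)
  simpa [mul_comm] using hcomp.tendsto_slope_zero_right

theorem measure_lt_abs_le_of_hasSubgaussianMGF [IsFiniteMeasure μ] {c : ℝ≥0}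
    (hX : HasSubgaussianMGF X c μ) {ε : ℝ} (hε : 0 ≤ ε) :
    μ {ω | ε < |X ω|} ≤ ENNReal.ofReal (2 * Real.exp (-ε ^ 2 / (2 * c))) := by
  rw [← ofReal_measureReal]
  refine ENNReal.ofReal_le_ofReal ?_
  calc μ.real {ω | ε < |X ω|} ≤ μ.real ({ω | ε ≤ X ω} ∪ {ω | ε ≤ (-X) ω}) :=
        measureReal_mono fun ω (hω : ε < |X ω|) => (lt_abs.1 hω).imp le_of_lt le_of_lt
    _ ≤ μ.real {ω | ε ≤ X ω} + μ.real {ω | ε ≤ (-X) ω} := measureReal_union_le _ _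
    _ ≤ Real.exp (-ε ^ 2 / (2 * c)) + Real.exp (-ε ^ 2 / (2 * c)) :=
        add_le_add (hX.measure_ge_le hε) (hX.neg.measure_ge_le hε)
    _ = 2 * Real.exp (-ε ^ 2 / (2 * c)) := (two_mul _).symm

end Moments

section StdGaussian

variable {E : Type*} [NormedAddCommGroup E] [InnerProductSpace ℝ E] [FiniteDimensional ℝ E]
  [MeasurableSpace E] [BorelSpace E]

theorem infConvInequality_stdGaussian {s : ℝ} (hs₀ : 0 < s) (hs₁ : s < 1) :
    InfConvInequality s (fun x z => s * ‖x - z‖ ^ 2 / (2 * (1 - s))) (stdGaussian E) := by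
  have hpres : MeasurePreserving
      (fun x : Fin (Module.finrank ℝ E) → ℝ => ∑ i, x i • stdOrthonormalBasis ℝ E i)
      (Measure.pi fun _ => gaussianReal 0 1) (stdGaussian E) := ⟨by fun_prop, rfl⟩
  refine .of_measurePreserving hpres ?_
  convert InfConvInequality.pi fun _ => infConvInequality_gaussianReal hs₀ hs₁ with x z
  rw [← Finset.sum_sub_distrib, ← Finset.sum_div, ← Finset.mul_sum]
  simp only [← sub_smul]
  rw [← real_inner_self_eq_norm_sq, (stdOrthonormalBasis ℝ E).orthonormal.inner_sum]
  simp [sq]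

theorem mgf_rpow_le_of_lipschitzWith {K : ℝ≥0} {F : E → ℝ} (hF : LipschitzWith K F) {s : ℝ}
    (hs₀ : 0 < s) (hs₁ : s < 1) (t : ℝ) :
    mgf F (stdGaussian E) t ^ s ≤
      mgf F (stdGaussian E) (s * t) * Real.exp (s * ((1 - s) * (K * t) ^ 2 / 2)) := by
  have hmeas : Measurable F := hF.continuous.measurable
  have hint := integrable_exp_mul_of_lipschitzWith (μ := stdGaussian E) hF
  have key := infConvInequality_stdGaussian (E := E) hs₀ hs₁
    (fun x => ENNReal.ofReal (Real.exp (t * F x)))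
    (fun z => ENNReal.ofReal
      (Real.exp (s * t * F z) * Real.exp (s * ((1 - s) * (K * t) ^ 2 / 2))))
    (by fun_prop) (by fun_prop) fun x z => by
      rw [ENNReal.ofReal_rpow_of_nonneg (Real.exp_pos _).le hs₀.le,
        ← ENNReal.ofReal_mul (by positivity), ← Real.exp_mul, ← Real.exp_add, ← Real.exp_add]
      refine ENNReal.ofReal_le_ofReal (Real.exp_le_exp.2 ?_)
      calc t * F x * s
          ≤ (t * F z + (1 - s) * (K * t) ^ 2 / 2 + dist x z ^ 2 / (2 * (1 - s))) * s :=
            mul_le_mul_of_nonneg_right (mul_le_of_lipschitzWith hF (sub_pos.2 hs₁) t x z) hs₀.le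
        _ = _ := by rw [dist_eq_norm]; ring
  rw [← ofReal_integral_eq_lintegral_ofReal (hint t) (.of_forall fun _ => by positivity),
    ← ofReal_integral_eq_lintegral_ofReal ((hint _).mul_const _)
      (.of_forall fun _ => by positivity), integral_mul_const,
    ENNReal.ofReal_rpow_of_nonneg (integral_nonneg fun _ => by positivity) hs₀.le] at key
  exact (ENNReal.ofReal_le_ofReal_iff (mul_nonneg mgf_nonneg (Real.exp_pos _).le)).1 key

theorem cgf_le_of_lipschitzWith {K : ℝ≥0} {F : E → ℝ} (hF : LipschitzWith K F) (t : ℝ) :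
    cgf F (stdGaussian E) t ≤ t * (stdGaussian E)[F] + (K * t) ^ 2 / 2 := by
  have hint := integrable_exp_mul_of_lipschitzWith (μ := stdGaussian E) hF
  have hslope {s : ℝ} (hs₀ : 0 < s) (hs₁ : s < 1) :
      cgf F (stdGaussian E) t ≤
        s⁻¹ * cgf F (stdGaussian E) (s * t) + (1 - s) * (K * t) ^ 2 / 2 := by
    have hlog := Real.log_le_log (Real.rpow_pos_of_pos (mgf_pos (hint t)) s)
      (mgf_rpow_le_of_lipschitzWith hF hs₀ hs₁ t)
    rw [Real.log_rpow (mgf_pos (hint t)), Real.log_mul (mgf_pos (hint _)).ne' (Real.exp_ne_zero _),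
      Real.log_exp, ← le_inv_mul_iff₀ hs₀, mul_add, inv_mul_cancel_left₀ hs₀.ne'] at hlog
    exact hlog
  have hcgf := tendsto_inv_mul_cgf_mul (X := F) (μ := stdGaussian E) (t := t)
    (by simp [integrableExpSet, hint])
  have hquad : Tendsto (fun s : ℝ => (1 - s) * (K * t) ^ 2 / 2) (𝓝[>] 0) (𝓝 ((K * t) ^ 2 / 2)) := by
    have hcont : Continuous fun s : ℝ => (1 - s) * (K * t) ^ 2 / 2 := by fun_prop
    simpa using (hcont.tendsto 0).mono_left nhdsWithin_le_nhds
  refine ge_of_tendsto (hcgf.add hquad) ?_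
  filter_upwards [Ioo_mem_nhdsGT one_pos] with s hs using hslope hs.1 hs.2

theorem hasSubgaussianMGF_of_lipschitzWith {K : ℝ≥0} {F : E → ℝ} (hF : LipschitzWith K F) :
    HasSubgaussianMGF (fun x => F x - (stdGaussian E)[F]) (K ^ 2) (stdGaussian E) := by
  have hint := integrable_exp_mul_of_lipschitzWith (μ := stdGaussian E) hF
  refine ⟨fun t => ?_, fun t => ?_⟩
  · simp_rw [mul_sub, Real.exp_sub]
    exact (hint t).div_const _
  · simp_rw [sub_eq_add_neg]
    rw [mgf_add_const, ← exp_cgf (hint t), ← Real.exp_add, Real.exp_le_exp, NNReal.coe_pow]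
    linarith [cgf_le_of_lipschitzWith hF t]

theorem measure_lt_abs_sub_integral_le_of_lipschitzWith {K : ℝ≥0} {F : E → ℝ}
    (hF : LipschitzWith K F) {ε : ℝ} (hε : 0 ≤ ε) :
    stdGaussian E {x | ε < |F x - (stdGaussian E)[F]|} ≤
      ENNReal.ofReal (2 * Real.exp (-ε ^ 2 / (2 * K ^ 2))) := by
  simpa using measure_lt_abs_le_of_hasSubgaussianMGF (hasSubgaussianMGF_of_lipschitzWith hF) hε

end StdGaussian

/-! ### The largest eigenvalue of a contraction -/

section LambdaMax

open scoped Matrix MatrixOrder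

variable {n : ℕ} {A B : Matrix (Fin n) (Fin n) ℝ}

theorem eigsOf_eq_eigenvalues (hA : A.IsHermitian) : eigsOf A = hA.eigenvalues := dif_pos hA

theorem eigenvalues_le_lambdaMax (hA : A.IsHermitian) (i : Fin n) :
    hA.eigenvalues i ≤ lambdaMax A := by
  rw [← eigsOf_eq_eigenvalues hA]
  exact le_ciSup (Set.finite_range _).bddAbove i

theorem dotProduct_mulVec_le_lambdaMax_mul (hA : A.IsHermitian) (v : Fin n → ℝ) :
    v ⬝ᵥ A *ᵥ v ≤ lambdaMax A * (v ⬝ᵥ v) := by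
  have hle : A ≤ algebraMap ℝ _ (lambdaMax A) := by
    refine le_algebraMap_of_spectrum_le (fun x hx => ?_) hA.isSelfAdjoint
    rw [hA.spectrum_real_eq_range_eigenvalues] at hx
    obtain ⟨i, rfl⟩ := hx
    exact eigenvalues_le_lambdaMax hA i
  have := (Matrix.le_iff.1 hle).dotProduct_mulVec_nonneg v
  simpa [Matrix.sub_mulVec, Algebra.algebraMap_eq_smul_one, Matrix.smul_mulVec] using this

theorem exists_dotProduct_mulVec_eq_lambdaMax [NeZero n] (hA : A.IsHermitian) :
    ∃ v : Fin n → ℝ, v ⬝ᵥ v = 1 ∧ v ⬝ᵥ A *ᵥ v = lambdaMax A := by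
  obtain ⟨i, hi⟩ := exists_eq_ciSup_of_finite (f := eigsOf A)
  rw [eigsOf_eq_eigenvalues hA] at hi
  have hv : (hA.eigenvectorBasis i).ofLp ⬝ᵥ (hA.eigenvectorBasis i).ofLp = 1 := by
    have := hA.eigenvectorBasis.inner_eq_one i
    rwa [EuclideanSpace.inner_eq_star_dotProduct, star_trivial] at this
  refine ⟨hA.eigenvectorBasis i, hv, ?_⟩
  rw [hA.mulVec_eigenvectorBasis i, dotProduct_smul, hv, smul_eq_mul, mul_one, hi, lambdaMax,
    eigsOf_eq_eigenvalues hA]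

theorem lambdaMax_le_add [NeZero n] (hA : A.IsHermitian) (hB : B.IsHermitian) {c : ℝ}
    (hAB : ∀ v : Fin n → ℝ, v ⬝ᵥ v = 1 → v ⬝ᵥ (A - B) *ᵥ v ≤ c) :
    lambdaMax A ≤ lambdaMax B + c := by
  obtain ⟨v, hv, hAv⟩ := exists_dotProduct_mulVec_eq_lambdaMax hA
  have hBv := dotProduct_mulVec_le_lambdaMax_mul hB v
  have hABv := hAB v hv
  rw [Matrix.sub_mulVec, dotProduct_sub] at hABv
  rw [hv, mul_one] at hBv
  linarith

end LambdaMax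

section Gote

open scoped Matrix

variable {r n : ℕ}

theorem tupleSym_comp_perm (a : Fin r → Fin n) (σ : Equiv.Perm (Fin r)) :
    tupleSym (a ∘ σ) = tupleSym a :=
  Subtype.ext (Multiset.coe_eq_coe.2 (σ.ofFn_comp_perm a))

theorem tupleSym_surjective : Function.Surjective (tupleSym : (Fin r → Fin n) → Sym (Fin n) r) := by
  rintro ⟨⟨l⟩, rfl⟩
  exact ⟨l.get, Subtype.ext (congrArg Multiset.ofList (List.ofFn_get l))⟩

theorem gote_comp_perm (ω : GoteSpace r n) (a : Fin r → Fin n) (σ : Equiv.Perm (Fin r)) :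
    gote ω (a ∘ σ) = gote ω a := by
  simp only [gote, permCount, tupleSym_comp_perm]

theorem gote_sub (ω ω' : GoteSpace r n) : gote (ω - ω') = gote ω - gote ω' := by
  ext a; simp [gote, mul_sub]

theorem gote_smul (c : ℝ) (ω : GoteSpace r n) : gote (c • ω) = c • gote ω := by
  ext a; simp [gote, mul_left_comm]

theorem gote_sq (ω : GoteSpace r n) (a : Fin r → Fin n) :
    gote ω a ^ 2 = r / permCount a * ω (tupleSym a) ^ 2 := by
  rw [gote, mul_pow, Real.sq_sqrt (by positivity)]

theorem sum_gote_sq (ω : GoteSpace r n) : ∑ a, gote ω a ^ 2 = r * ∑ m, ω m ^ 2 := by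
  classical
  rw [← Finset.sum_fiberwise Finset.univ tupleSym, Finset.mul_sum]
  refine Finset.sum_congr rfl fun m _ => ?_
  obtain ⟨b, rfl⟩ := tupleSym_surjective m
  have hterm : ∀ a ∈ Finset.univ.filter fun a : Fin r → Fin n => tupleSym a = tupleSym b,
      gote ω a ^ 2 = r / permCount b * ω (tupleSym b) ^ 2 := by
    intro a ha
    simp only [gote_sq, permCount, (Finset.mem_filter.1 ha).2]
  have hb : (permCount b : ℝ) ≠ 0 :=
    Nat.cast_ne_zero.2 (Finset.card_ne_zero.2 ⟨b, by simp⟩)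
  rw [Finset.sum_congr rfl hterm, Finset.sum_const, nsmul_eq_mul, ← permCount]
  field_simp

theorem glue_comp_swap (hr : 2 ≤ r) (i j : Fin n) (f : Fin (r - 2) → Fin n) :
    (glue i j f : Fin r → Fin n) ∘ Equiv.swap ⟨0, by omega⟩ ⟨1, by omega⟩ = glue j i f := by
  ext t
  simp only [Function.comp_apply, Equiv.swap_apply_def, Fin.ext_iff]
  split_ifs with h₀ h₁ <;> simp [glue, *]

theorem glue_injective (hr : 2 ≤ r) :
    Function.Injective fun p : Fin n × Fin n × (Fin (r - 2) → Fin n) =>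
      (glue p.1 p.2.1 p.2.2 : Fin r → Fin n) := by
  rintro ⟨i, j, f⟩ ⟨i', j', f'⟩ h
  have hi : i = i' := by simpa [glue] using congrFun h ⟨0, by omega⟩
  have hj : j = j' := by simpa [glue] using congrFun h ⟨1, by omega⟩
  have hf : f = f' := funext fun k => by simpa [glue] using congrFun h ⟨k + 2, by omega⟩
  rw [hi, hj, hf]

theorem isHermitian_generalContraction (hr : 2 ≤ r) (ω : GoteSpace r n)
    (x : Fin (r - 2) → Fin n → ℝ) : (generalContraction ω x).IsHermitian := by
  refine Matrix.IsHermitian.ext fun i j => ?_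
  simp only [generalContraction, star_trivial, ← glue_comp_swap hr i j, gote_comp_perm]

theorem generalContraction_sub (ω ω' : GoteSpace r n) (x : Fin (r - 2) → Fin n → ℝ) :
    generalContraction (ω - ω') x = generalContraction ω x - generalContraction ω' x := by
  ext i j; simp [generalContraction, gote_sub, sub_mul]

theorem generalContraction_smul (c : ℝ) (ω : GoteSpace r n) (x : Fin (r - 2) → Fin n → ℝ) :
    generalContraction (c • ω) x = c • generalContraction ω x := by
  ext i j; simp [generalContraction, gote_smul, Finset.mul_sum, mul_assoc]

theorem dotProduct_generalContraction_mulVec (ω : GoteSpace r n) (x : Fin (r - 2) → Fin n → ℝ)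
    (v w : Fin n → ℝ) :
    v ⬝ᵥ generalContraction ω x *ᵥ w =
      ∑ p : Fin n × Fin n × (Fin (r - 2) → Fin n),
        (v p.1 * w p.2.1 * ∏ k, x k (p.2.2 k)) * gote ω (glue p.1 p.2.1 p.2.2) := by
  simp only [Fintype.sum_prod_type, dotProduct, Matrix.mulVec, generalContraction,
    Finset.mul_sum, Finset.sum_mul]
  refine Finset.sum_congr rfl fun i _ => Finset.sum_congr rfl fun j _ =>
    Finset.sum_congr rfl fun f _ => ?_
  ring

theorem sum_mul_mul_prod_sq (x : Fin r → Fin n → ℝ) (v w : Fin n → ℝ) :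
    ∑ p : Fin n × Fin n × (Fin r → Fin n), (v p.1 * w p.2.1 * ∏ k, x k (p.2.2 k)) ^ 2 =
      (∑ i, v i ^ 2) * (∑ i, w i ^ 2) * ∏ k, ∑ i, x k i ^ 2 := by
  simp only [Fintype.sum_prod_type, mul_pow, ← Finset.prod_pow, ← Finset.mul_sum,
    ← Finset.sum_mul, ← Fintype.prod_sum (fun k i => x k i ^ 2)]

theorem sum_gote_glue_sq_le (hr : 2 ≤ r) (ω : GoteSpace r n) :
    ∑ p : Fin n × Fin n × (Fin (r - 2) → Fin n), gote ω (glue p.1 p.2.1 p.2.2) ^ 2 ≤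
      r * ∑ m, ω m ^ 2 := by
  classical
  rw [← sum_gote_sq, ← Finset.sum_image (f := fun a => gote ω a ^ 2) (glue_injective hr).injOn]
  exact Finset.sum_le_univ_sum_of_nonneg fun a => sq_nonneg _

theorem dotProduct_generalContraction_mulVec_le (hr : 2 ≤ r) (ω : GoteSpace r n)
    (x : Fin (r - 2) → Fin n → ℝ) (v w : Fin n → ℝ) :
    v ⬝ᵥ generalContraction ω x *ᵥ w ≤
      √((∑ i, v i ^ 2) * (∑ i, w i ^ 2) * ∏ k, ∑ i, x k i ^ 2) * √(r * ∑ m, ω m ^ 2) := by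
  rw [dotProduct_generalContraction_mulVec]
  refine (Real.sum_mul_le_sqrt_mul_sqrt _ _ _).trans ?_
  rw [sum_mul_mul_prod_sq]
  gcongr
  exact sum_gote_glue_sq_le hr ω

theorem lipschitzWith_lambdaMax_generalContraction [NeZero n] (hr : 2 ≤ r)
    {x : Fin (r - 2) → Fin n → ℝ} (hx : ∀ k, ∑ i, x k i ^ 2 ≤ 1) :
    LipschitzWith (NNReal.sqrt r) fun ω : EuclideanSpace ℝ (Sym (Fin n) r) =>
      lambdaMax (generalContraction ω.ofLp x) := by
  refine LipschitzWith.of_le_add_mul _ fun ω ω' => ?_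
  refine lambdaMax_le_add (isHermitian_generalContraction hr _ x)
    (isHermitian_generalContraction hr _ x) fun v hv => ?_
  have hprod : ∏ k, ∑ i, x k i ^ 2 ≤ 1 :=
    Finset.prod_le_one (fun k _ => Finset.sum_nonneg fun i _ => sq_nonneg _) fun k _ => hx k
  have hv' : ∑ i, v i ^ 2 = 1 := by simpa [dotProduct, sq] using hv
  rw [← generalContraction_sub]
  calc v ⬝ᵥ generalContraction (ω.ofLp - ω'.ofLp) x *ᵥ v
      ≤ √(∏ k, ∑ i, x k i ^ 2) * √(r * ∑ m, (ω.ofLp - ω'.ofLp) m ^ 2) := by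
        simpa [hv'] using dotProduct_generalContraction_mulVec_le hr (ω.ofLp - ω'.ofLp) x v v
    _ ≤ √(r * ∑ m, (ω.ofLp - ω'.ofLp) m ^ 2) :=
        mul_le_of_le_one_left (Real.sqrt_nonneg _) (Real.sqrt_le_one.2 hprod)
    _ = NNReal.sqrt r * dist ω ω' := by
        simp [EuclideanSpace.dist_eq, Real.dist_eq]

theorem lipschitzWith_lambdaMax_smul_generalContraction [NeZero n] (hr : 2 ≤ r)
    {x : Fin (r - 2) → Fin n → ℝ} (hx : ∀ k, ∑ i, x k i ^ 2 ≤ 1) (c : ℝ) :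
    LipschitzWith (NNReal.sqrt r * ‖c‖₊) fun ω : EuclideanSpace ℝ (Sym (Fin n) r) =>
      lambdaMax (c • generalContraction ω.ofLp x) := by
  simpa only [Function.comp_def, WithLp.ofLp_smul, generalContraction_smul] using
    (lipschitzWith_lambdaMax_generalContraction hr hx).comp (lipschitzWith_smul c)

theorem measurePreserving_toLp_goteMeasure :
    MeasurePreserving (WithLp.toLp 2) (goteMeasure r n)
      (stdGaussian (EuclideanSpace ℝ (Sym (Fin n) r))) :=
  ⟨by fun_prop, map_pi_eq_stdGaussian⟩

theorem goteMeasure_lt_abs_sub_integral_le {K : ℝ≥0} {F : GoteSpace r n → ℝ}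
    (hF : LipschitzWith K fun ω : EuclideanSpace ℝ (Sym (Fin n) r) => F ω.ofLp) {ε : ℝ}
    (hε : 0 ≤ ε) :
    goteMeasure r n {ω | ε < |F ω - ∫ ω', F ω' ∂goteMeasure r n|} ≤
      ENNReal.ofReal (2 * Real.exp (-ε ^ 2 / (2 * K ^ 2))) := by
  have hemb : MeasurableEmbedding (WithLp.toLp 2 : GoteSpace r n → EuclideanSpace ℝ _) :=
    (MeasurableEquiv.toLp 2 (GoteSpace r n)).measurableEmbedding
  have hpres := measurePreserving_toLp_goteMeasure (r := r) (n := n)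
  have key := measure_lt_abs_sub_integral_le_of_lipschitzWith hF hε
  rwa [← hpres.integral_comp hemb, ← hpres.measure_preimage_emb hemb] at key

end Gote

theorem top_eigenvalue_concentration_general
    {r n : ℕ} (hr : 2 ≤ r) (hn : 1 ≤ n)
    {x : Fin (r - 2) → Fin n → ℝ} (hx : ∀ k, ∑ i, x k i ^ 2 ≤ 1) {ε : ℝ} (hε : 0 ≤ ε) :
    goteMeasure r n {ω |
        ε < |lambdaMax ((√n)⁻¹ • generalContraction ω x) -
          ∫ ω', lambdaMax ((√n)⁻¹ • generalContraction ω' x) ∂goteMeasure r n|} ≤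
      ENNReal.ofReal (2 * Real.exp (-(n * ε ^ 2) / (2 * r))) := by
  have : NeZero n := ⟨by omega⟩
  refine (goteMeasure_lt_abs_sub_integral_le
    (lipschitzWith_lambdaMax_smul_generalContraction hr hx (√n)⁻¹) hε).trans_eq ?_
  congr 3
  simp only [nnnorm_inv, NNReal.coe_mul, Real.coe_sqrt, NNReal.coe_natCast, NNReal.coe_inv,
    coe_nnnorm, Real.norm_eq_abs, mul_pow, Nat.cast_nonneg, Real.sq_sqrt, inv_pow, sq_abs]
  field_simp

end

/-- **Concentration of the largest eigenvalue of a contraction.**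
For unit vectors `x₃, …, x_r`, and `L = G·x₃⊗⋯⊗x_r`,
`P(|λ₁(n^{−1/2}L) − E λ₁(n^{−1/2}L)| > ε) ≤ 2·exp(−nε²/(2r))`. -/
theorem top_eigenvalue_concentration
    (r n : ℕ) (hr : 3 ≤ r) (hn : 1 ≤ n)
    (x : Fin (r - 2) → (Fin n → ℝ)) (hx : ∀ k, ∑ i, x k i ^ 2 = 1)
    (ε : ℝ) (hε : 0 < ε) :
    goteMeasure r n {ω |
        ε < |lambdaMax ((Real.sqrt n)⁻¹ • generalContraction ω x)
            - ∫ ω', lambdaMax ((Real.sqrt n)⁻¹ • generalContraction ω' x)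
                ∂(goteMeasure r n)|}
      ≤ ENNReal.ofReal (2 * Real.exp (-((n : ℝ) * ε ^ 2) / (2 * (r : ℝ)))) := by
  exact top_eigenvalue_concentration_general (by omega) hn (fun k => (hx k).le) hε.le
end

section
/- Let n ≥ 2, let x, y ∈ ℝⁿ be unit vectors that are linearly independent, let a ∈ ℝ and b ∈ ℝ with b ≠ 0, and set t = ⟨x,y⟩, B = a·xxᵀ + b(xyᵀ + yxᵀ), λ_± = (a + 2bt ± √(a² + 4abt + 4b²))/2, s_± = √(λ_±² + b²(1 − t²)), γ_± = sign(b)·(λ_± − bt)/s_±, δ_± = |b|/s_±, and v_± = γ_±·x + δ_±·y. Then: (i) λ_+ and λ_− are nonzero, and every nonzero eigenvalue of B equals λ_+ or λ_−; (ii) v_+ and v_− are unit vectors satisfying B·v_± = λ_±·v_±; (iii) ⟨x, v_±⟩ = sign(b)·λ_±/s_±. -/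
noncomputable section

/-- The Euclidean inner product on `ℝⁿ`. -/
def dotp {n : ℕ} (x y : Fin n → ℝ) : ℝ := ∑ i, x i * y i

/-- The rank-two symmetric matrix `B = a·xxᵀ + b(xyᵀ + yxᵀ)`. -/
def Bmat {n : ℕ} (a b : ℝ) (x y : Fin n → ℝ) : Matrix (Fin n) (Fin n) ℝ :=
  fun i j => a * x i * x j + b * (x i * y j + y i * x j)

/-- `λ₊ = (a + 2bt + √(a² + 4abt + 4b²))/2`. -/
def lamP (a b t : ℝ) : ℝ := (a + 2 * b * t + Real.sqrt (a ^ 2 + 4 * a * b * t + 4 * b ^ 2)) / 2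

/-- `λ₋ = (a + 2bt − √(a² + 4abt + 4b²))/2`. -/
def lamM (a b t : ℝ) : ℝ := (a + 2 * b * t - Real.sqrt (a ^ 2 + 4 * a * b * t + 4 * b ^ 2)) / 2

/-- `s = √(λ² + b²(1 − t²))`. -/
def sOf (b t lam : ℝ) : ℝ := Real.sqrt (lam ^ 2 + b ^ 2 * (1 - t ^ 2))

/-- The eigenvector `v = γ·x + δ·y` with `γ = sign(b)(λ − bt)/s` and `δ = |b|/s`. -/
def vOf {n : ℕ} (b t lam : ℝ) (x y : Fin n → ℝ) : Fin n → ℝ :=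
  fun i => (Real.sign b * (lam - b * t) / sOf b t lam) * x i + (|b| / sOf b t lam) * y i

end

/-!
With `t = ⟨x, y⟩`, the matrix `B` vanishes on the orthogonal complement of `span {x, y}` and acts
on that plane by a `2 × 2` matrix of trace `a + 2bt` and determinant `-b²(1 - t²)`. The numbers
`λ_±` are the roots of the resulting quadratic, whose constant term is nonzero by the strict
Cauchy–Schwarz inequality. For a root `λ`, the vector `(λ - bt) x + b y` is an eigenvector of
squared length `λ² + b²(1 - t²)`, and `v_±` is its normalization.
-/

section SymRankTwo

open Matrix

variable {R ι : Type*} [CommRing R]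

/-- The symmetric matrix `a xxᵀ + b (xyᵀ + yxᵀ)` of rank at most two; `Bmat` is the case of real
matrices indexed by `Fin n`. -/
def symRankTwo (a b : R) (x y : ι → R) : Matrix ι ι R :=
  a • vecMulVec x x + b • (vecMulVec x y + vecMulVec y x)

/-- The value at `l` of the characteristic polynomial of `symRankTwo a b x y` restricted to the
span of two independent unit vectors `x`, `y` with inner product `t`, where it has the matrix
`!![a + b * t, a * t + b; b, b * t]` in the basis `x, y`. -/
def planeCharpoly (a b t l : R) : R :=
  l ^ 2 - (a + 2 * b * t) * l - b ^ 2 * (1 - t ^ 2)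

theorem ne_zero_of_planeCharpoly_eq_zero [NoZeroDivisors R] {a b t l : R} (hb : b ≠ 0)
    (ht : t ^ 2 ≠ 1) (hl : planeCharpoly a b t l = 0) : l ≠ 0 := by
  rintro rfl
  have hconst : b ^ 2 * (1 - t ^ 2) = 0 := by
    unfold planeCharpoly at hl
    linear_combination -hl
  exact mul_ne_zero (pow_ne_zero 2 hb) (sub_ne_zero.2 ht.symm) hconst

variable [Fintype ι]

/-- The vector `(l - b⟨x, y⟩) x + b y`: an eigenvector of `symRankTwo a b x y`, not normalized,
when `x`, `y` are unit vectors and `l` is a root of `planeCharpoly`. -/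
def planeEigenvector (b l : R) (x y : ι → R) : ι → R :=
  (l - b * (x ⬝ᵥ y)) • x + b • y

theorem symRankTwo_mulVec (a b : R) (x y v : ι → R) :
    symRankTwo a b x y *ᵥ v = (a * (x ⬝ᵥ v) + b * (y ⬝ᵥ v)) • x + (b * (x ⬝ᵥ v)) • y := by
  simp only [symRankTwo, add_mulVec, smul_mulVec, vecMulVec_mulVec, op_smul_eq_smul]
  module

theorem dotProduct_planeEigenvector_left {x : ι → R} (hx : x ⬝ᵥ x = 1) (b l : R) (y : ι → R) :
    x ⬝ᵥ planeEigenvector b l x y = l := by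
  simp only [planeEigenvector, dotProduct_add, dotProduct_smul, smul_eq_mul, hx]
  ring

theorem dotProduct_planeEigenvector_right {y : ι → R} (hy : y ⬝ᵥ y = 1) (b l : R) (x : ι → R) :
    y ⬝ᵥ planeEigenvector b l x y = (l - b * (x ⬝ᵥ y)) * (x ⬝ᵥ y) + b := by
  simp only [planeEigenvector, dotProduct_add, dotProduct_smul, smul_eq_mul, hy,
    dotProduct_comm y x, mul_one]

theorem planeEigenvector_dotProduct_self {x y : ι → R} (hx : x ⬝ᵥ x = 1) (hy : y ⬝ᵥ y = 1)
    (b l : R) :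
    planeEigenvector b l x y ⬝ᵥ planeEigenvector b l x y =
      l ^ 2 + b ^ 2 * (1 - (x ⬝ᵥ y) ^ 2) := by
  conv_lhs => arg 1; rw [planeEigenvector]
  rw [add_dotProduct, smul_dotProduct, smul_dotProduct, dotProduct_planeEigenvector_left hx,
    dotProduct_planeEigenvector_right hy, smul_eq_mul, smul_eq_mul]
  ring

theorem symRankTwo_mulVec_planeEigenvector {x y : ι → R} (hx : x ⬝ᵥ x = 1) (hy : y ⬝ᵥ y = 1)
    {a b l : R} (hl : planeCharpoly a b (x ⬝ᵥ y) l = 0) :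
    symRankTwo a b x y *ᵥ planeEigenvector b l x y = l • planeEigenvector b l x y := by
  have hcoeff : a * l + b * ((l - b * (x ⬝ᵥ y)) * (x ⬝ᵥ y) + b) = l * (l - b * (x ⬝ᵥ y)) := by
    unfold planeCharpoly at hl
    linear_combination -hl
  rw [symRankTwo_mulVec, dotProduct_planeEigenvector_left hx, dotProduct_planeEigenvector_right hy,
    hcoeff, planeEigenvector]
  module

theorem planeCharpoly_eq_zero_of_mulVec_eq_smul [NoZeroDivisors R] {x y v : ι → R} (hx : x ⬝ᵥ x = 1)
    (hy : y ⬝ᵥ y = 1) {a b l : R} (hl : l ≠ 0) (hv : v ≠ 0)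
    (hBv : symRankTwo a b x y *ᵥ v = l • v) : planeCharpoly a b (x ⬝ᵥ y) l = 0 := by
  rw [symRankTwo_mulVec] at hBv
  have hxBv : a * (x ⬝ᵥ v) + b * (y ⬝ᵥ v) + b * (x ⬝ᵥ v) * (x ⬝ᵥ y) = l * (x ⬝ᵥ v) := by
    simpa only [dotProduct_add, dotProduct_smul, smul_eq_mul, hx, mul_one] using
      congrArg (x ⬝ᵥ ·) hBv
  have hyBv : (a * (x ⬝ᵥ v) + b * (y ⬝ᵥ v)) * (x ⬝ᵥ y) + b * (x ⬝ᵥ v) = l * (y ⬝ᵥ v) := by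
    simpa only [dotProduct_add, dotProduct_smul, smul_eq_mul, hy, mul_one,
      dotProduct_comm y x] using congrArg (y ⬝ᵥ ·) hBv
  have hxv : x ⬝ᵥ v ≠ 0 := by
    intro hxv
    have hyv : b * (y ⬝ᵥ v) = 0 := by simpa [hxv] using hxBv
    have hlv : l • v = 0 := by simpa [hxv, hyv] using hBv.symm
    exact smul_ne_zero hl hv hlv
  refine (mul_eq_zero.1 ?_).resolve_right hxv
  unfold planeCharpoly
  linear_combination (-(l - b * (x ⬝ᵥ y))) * hxBv - b * hyBv

end SymRankTwo

open Matrix in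
theorem sq_dotProduct_lt_of_linearIndependent {R ι : Type*} [CommRing R] [LinearOrder R]
    [IsStrictOrderedRing R] [Fintype ι] {x y : ι → R} (hxy : LinearIndependent R ![x, y]) :
    (x ⬝ᵥ y) ^ 2 < (x ⬝ᵥ x) * (y ⬝ᵥ y) := by
  have self_pos {v : ι → R} (hv : v ≠ 0) : 0 < v ⬝ᵥ v :=
    (Finset.sum_nonneg fun i _ ↦ mul_self_nonneg (v i)).lt_of_ne'
      (mt dotProduct_self_eq_zero.1 hv)
  have hx : 0 < x ⬝ᵥ x := self_pos (hxy.ne_zero 0)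
  let w := (-(x ⬝ᵥ y)) • x + (x ⬝ᵥ x) • y
  have hw : w ≠ 0 := fun hw ↦ hx.ne' (LinearIndependent.pair_iff.1 hxy _ _ hw).2
  have hww : w ⬝ᵥ w = (x ⬝ᵥ x) * ((x ⬝ᵥ x) * (y ⬝ᵥ y) - (x ⬝ᵥ y) ^ 2) := by
    simp only [w, add_dotProduct, dotProduct_add, smul_dotProduct, dotProduct_smul, smul_eq_mul,
      dotProduct_comm y x]
    ring
  exact sub_pos.1 (pos_of_mul_pos_right (hww ▸ self_pos hw) hx.le)

theorem planeCharpoly_eq_zero_iff {t : ℝ} (ht : t ^ 2 ≤ 1) (a b l : ℝ) :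
    planeCharpoly a b t l = 0 ↔ l = lamP a b t ∨ l = lamM a b t := by
  have hdisc : 0 ≤ a ^ 2 + 4 * a * b * t + 4 * b ^ 2 := by
    have hsplit : a ^ 2 + 4 * a * b * t + 4 * b ^ 2 =
        (a + 2 * b * t) ^ 2 + 4 * b ^ 2 * (1 - t ^ 2) := by ring
    rw [hsplit]
    have := sub_nonneg.2 ht
    positivity
  have hfactor : planeCharpoly a b t l = (l - lamP a b t) * (l - lamM a b t) := by
    unfold planeCharpoly lamP lamM
    linear_combination (1 / 4) * Real.sq_sqrt hdisc
  rw [hfactor, mul_eq_zero, sub_eq_zero, sub_eq_zero]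

theorem real_sign_mul_self (r : ℝ) : Real.sign r * r = |r| := by
  rcases lt_trichotomy r 0 with hr | rfl | hr
  · rw [Real.sign_of_neg hr, abs_of_neg hr, neg_one_mul]
  · simp
  · rw [Real.sign_of_pos hr, abs_of_pos hr, one_mul]

theorem real_sign_sq {r : ℝ} (hr : r ≠ 0) : Real.sign r ^ 2 = 1 := by
  rcases Real.sign_apply_eq_of_ne_zero r hr with h | h <;> norm_num [h]

section UnitEigenvector

open Matrix

variable {n : ℕ} {x y : Fin n → ℝ}

theorem dotp_eq_dotProduct (x y : Fin n → ℝ) : dotp x y = x ⬝ᵥ y := rfl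

theorem Bmat_eq_symRankTwo (a b : ℝ) (x y : Fin n → ℝ) : Bmat a b x y = symRankTwo a b x y := by
  ext i j
  simp only [Bmat, symRankTwo, Matrix.add_apply, Matrix.smul_apply, vecMulVec_apply, smul_eq_mul]
  ring

theorem vOf_eq_smul_planeEigenvector (b l : ℝ) (x y : Fin n → ℝ) :
    vOf b (dotp x y) l x y =
      (Real.sign b / sOf b (dotp x y) l) • planeEigenvector b l x y := by
  ext i
  simp only [vOf, planeEigenvector, ← real_sign_mul_self, Pi.smul_apply, Pi.add_apply,
    smul_eq_mul, dotp_eq_dotProduct]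
  ring

theorem dotp_vOf (hx : dotp x x = 1) (b l : ℝ) (y : Fin n → ℝ) :
    dotp x (vOf b (dotp x y) l x y) = Real.sign b * l / sOf b (dotp x y) l := by
  rw [vOf_eq_smul_planeEigenvector]
  rw [dotp_eq_dotProduct x (_ • _), dotProduct_smul, dotProduct_planeEigenvector_left hx,
    smul_eq_mul, div_mul_eq_mul_div]

theorem Bmat_mulVec_vOf (hx : dotp x x = 1) (hy : dotp y y = 1) {a b l : ℝ}
    (hl : planeCharpoly a b (dotp x y) l = 0) :
    Bmat a b x y *ᵥ vOf b (dotp x y) l x y = l • vOf b (dotp x y) l x y := by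
  rw [Bmat_eq_symRankTwo, vOf_eq_smul_planeEigenvector, mulVec_smul,
    symRankTwo_mulVec_planeEigenvector hx hy hl, smul_comm]

theorem vOf_dotp_self (hx : dotp x x = 1) (hy : dotp y y = 1) {b : ℝ} (hb : b ≠ 0)
    (ht : dotp x y ^ 2 < 1) (l : ℝ) :
    dotp (vOf b (dotp x y) l x y) (vOf b (dotp x y) l x y) = 1 := by
  have hlen : 0 < l ^ 2 + b ^ 2 * (1 - dotp x y ^ 2) := by
    have := sub_pos.2 ht
    positivity
  rw [vOf_eq_smul_planeEigenvector]
  rw [dotp_eq_dotProduct (_ • _), smul_dotProduct, dotProduct_smul,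
    planeEigenvector_dotProduct_self hx hy, smul_eq_mul, smul_eq_mul, ← mul_assoc, ← sq, div_pow,
    real_sign_sq hb, sOf, Real.sq_sqrt hlen.le]
  exact one_div_mul_cancel hlen.ne'

end UnitEigenvector

/-- **Eigen-structure of the rank-two perturbation** `B = a·xxᵀ + b(xyᵀ + yxᵀ)` for unit
vectors `x, y` that are linearly independent and `b ≠ 0`, with `t = ⟨x,y⟩`:
(i) `λ₊, λ₋` are nonzero and every nonzero eigenvalue of `B` equals `λ₊` or `λ₋`;
(ii) `v₊, v₋` are unit eigenvectors for `λ₊, λ₋`;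
(iii) `⟨x, v₊⟩ = sign(b)·λ₊/s₊` and `⟨x, v₋⟩ = sign(b)·λ₋/s₋`. -/
theorem rank_two_eigen_structure
    (n : ℕ) (hn : 2 ≤ n) (x y : Fin n → ℝ)
    (hx : ∑ i, x i ^ 2 = 1) (hy : ∑ i, y i ^ 2 = 1)
    (hind : LinearIndependent ℝ ![x, y])
    (a b : ℝ) (hb : b ≠ 0) :
    (lamP a b (dotp x y) ≠ 0 ∧ lamM a b (dotp x y) ≠ 0 ∧
      ∀ lam : ℝ, lam ≠ 0 →
        (∃ v : Fin n → ℝ, v ≠ 0 ∧ (Bmat a b x y).mulVec v = lam • v) →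
        lam = lamP a b (dotp x y) ∨ lam = lamM a b (dotp x y))
    ∧ ((∑ i, vOf b (dotp x y) (lamP a b (dotp x y)) x y i ^ 2 = 1) ∧
        (Bmat a b x y).mulVec (vOf b (dotp x y) (lamP a b (dotp x y)) x y)
          = lamP a b (dotp x y) • vOf b (dotp x y) (lamP a b (dotp x y)) x y ∧
      (∑ i, vOf b (dotp x y) (lamM a b (dotp x y)) x y i ^ 2 = 1) ∧
        (Bmat a b x y).mulVec (vOf b (dotp x y) (lamM a b (dotp x y)) x y)
          = lamM a b (dotp x y) • vOf b (dotp x y) (lamM a b (dotp x y)) x y)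
    ∧ (dotp x (vOf b (dotp x y) (lamP a b (dotp x y)) x y)
          = Real.sign b * lamP a b (dotp x y) / sOf b (dotp x y) (lamP a b (dotp x y)) ∧
       dotp x (vOf b (dotp x y) (lamM a b (dotp x y)) x y)
          = Real.sign b * lamM a b (dotp x y) / sOf b (dotp x y) (lamM a b (dotp x y))) := by
  have sum_sq_eq (v : Fin n → ℝ) : ∑ i, v i ^ 2 = dotp v v := by simp only [dotp, sq]
  simp only [sum_sq_eq] at hx hy ⊢
  have ht : dotp x y ^ 2 < 1 := by
    simpa only [← dotp_eq_dotProduct, hx, hy, mul_one] using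
      sq_dotProduct_lt_of_linearIndependent hind
  have roots := planeCharpoly_eq_zero_iff ht.le a b
  have hP := (roots _).2 (.inl rfl)
  have hM := (roots _).2 (.inr rfl)
  refine ⟨⟨ne_zero_of_planeCharpoly_eq_zero hb ht.ne hP,
      ne_zero_of_planeCharpoly_eq_zero hb ht.ne hM, ?_⟩,
    ⟨vOf_dotp_self hx hy hb ht _, Bmat_mulVec_vOf hx hy hP,
      vOf_dotp_self hx hy hb ht _, Bmat_mulVec_vOf hx hy hM⟩,
    dotp_vOf hx b _ y, dotp_vOf hx b _ y⟩
  rintro l hl ⟨v, hv, hBv⟩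
  rw [Bmat_eq_symRankTwo] at hBv
  exact (roots l).1 (planeCharpoly_eq_zero_of_mulVec_eq_smul hx hy hl hv hBv)
end
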